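/- With the determinant-exponent setup below, the maximizer of pow is unique: there exists a permutation σ* of Fin α such that pow(σ) < pow(σ*) for every permutation σ ≠ σ* of Fin α. -/

import Mathlib

/-!
A maximizer of `pow` exists because there are finitely many permutations, so it suffices that any
two maximizers agree. Let `σ` be a maximizer. Exchanging the images of two rows `r₁ < r₂` cannot
increase `pow` (`exchange_le`), and this has two consequences.

* If `r₁`, `r₂` lie in different blocks of `s` rows, then `σ r₁ < σ r₂`. Otherwise the exchange
  would gain: within one block of `w` columns because `h` is increasing, and across two such blocks
  because the gaps of `i` exceed `α * n`, which bounds any loss in the `h`-part. Hence `σ`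
  preserves the blocks of size `s` (`div_eq_of_lt_of_div_lt`).
* If `r₁`, `r₂` lie in the same block of rows, then `σ r₁ % w ≤ σ r₂ % w`. The inequality is strict,
  because `σ r₁` and `σ r₂` lie in one block of `s ≤ w` consecutive integers, on which residues
  modulo `w` are distinct.

Thus `r ↦ (σ r / s, σ r % w)` is strictly increasing for the lexicographic order. A strictly
increasing function on `Fin α` is determined by its range, and the range here does not depend on
the permutation `σ`, so `σ` is determined.
-/

/-- `pow σ = Σ_{r} ( ⌊σ(r)/w⌋ · i(⌊r/s⌋) + r · h(σ(r) mod w) )`, the exponent of the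
primitive element `g` in the Leibniz-expansion term of `det Ξ` associated with the
permutation `σ` of `Fin α`. -/
def powPerm (α s w z : ℕ) (hw : 0 < w) (hsα : s ∣ α) (hz : z = α / s)
    (h : Fin w → ℕ) (i : Fin z → ℕ) (σ : Equiv.Perm (Fin α)) : ℕ :=
  ∑ r : Fin α,
    ((σ r : ℕ) / w *
        i ⟨(r : ℕ) / s, by rw [hz]; exact Nat.div_lt_div_of_lt_of_dvd hsα r.isLt⟩
      + (r : ℕ) * h ⟨(σ r : ℕ) % w, Nat.mod_lt _ hw⟩)

/-- `σ` is block-preserving if it maps each block row of size `s` to the block column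
of size `s` with the same index: `⌊σ(r)/s⌋ = ⌊r/s⌋` for all `r`. -/
def IsBlockPreserving (α s : ℕ) (σ : Equiv.Perm (Fin α)) : Prop :=
  ∀ r : Fin α, (σ r : ℕ) / s = (r : ℕ) / s

/-- Exchanging the values of an optimal assignment at two places does not increase the total. -/
lemma exchange_le {α : ℕ} (f : Fin α → Fin α → ℕ) (σ : Equiv.Perm (Fin α))
    (hmax : ∀ τ : Equiv.Perm (Fin α), ∑ r, f r (τ r) ≤ ∑ r, f r (σ r))
    {r₁ r₂ : Fin α} (hne : r₁ ≠ r₂) :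
    f r₁ (σ r₂) + f r₂ (σ r₁) ≤ f r₁ (σ r₁) + f r₂ (σ r₂) := by
  have key := hmax (σ * Equiv.swap r₁ r₂)
  have hmem : r₂ ∈ Finset.univ.erase r₁ := by simp [hne.symm]
  rw [← Finset.add_sum_erase _ _ (Finset.mem_univ r₁), ← Finset.add_sum_erase _ _ hmem,
    ← Finset.add_sum_erase _ (fun r => f r (σ r)) (Finset.mem_univ r₁),
    ← Finset.add_sum_erase _ (fun r => f r (σ r)) hmem] at key
  have hrest : ∑ r ∈ (Finset.univ.erase r₁).erase r₂, f r ((σ * Equiv.swap r₁ r₂) r)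
      = ∑ r ∈ (Finset.univ.erase r₁).erase r₂, f r (σ r) := by
    refine Finset.sum_congr rfl fun r hr => ?_
    simp only [Finset.mem_erase, Finset.mem_univ, and_true] at hr
    rw [Equiv.Perm.mul_apply, Equiv.swap_apply_of_ne_of_ne hr.2 hr.1]
  rw [hrest] at key
  simp only [Equiv.Perm.mul_apply, Equiv.swap_apply_left, Equiv.swap_apply_right] at key
  omega

/-- A permutation that is increasing across blocks of size `s` preserves these blocks: the image of
`r` exceeds the images of all earlier blocks and is below the images of all later ones. -/
lemma div_eq_of_lt_of_div_lt {α s : ℕ} (hs : 0 < s) (hsα : s ∣ α) (σ : Equiv.Perm (Fin α))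
    (hσ : ∀ r₁ r₂ : Fin α, (r₁ : ℕ) / s < (r₂ : ℕ) / s → σ r₁ < σ r₂) :
    IsBlockPreserving α s σ := by
  intro r
  have hk : (r : ℕ) / s < α / s := Nat.div_lt_div_of_lt_of_dvd hsα r.isLt
  have hle : ((r : ℕ) / s + 1) * s ≤ α := by
    calc ((r : ℕ) / s + 1) * s ≤ α / s * s := Nat.mul_le_mul_right _ hk
      _ = α := Nat.div_mul_cancel hsα
  rw [add_mul, one_mul] at hle
  have hcard : ∀ S T : Finset (Fin α), (∀ x ∈ S, σ x ∈ T) → S.card ≤ T.card := fun S T hST =>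
    Finset.card_le_card_of_injOn σ hST σ.injective.injOn
  rw [Nat.div_eq_iff hs]
  constructor
  · have := hcard (Finset.Iio ⟨(r : ℕ) / s * s, by omega⟩) (Finset.Iio (σ r)) fun x hx => by
      rw [Finset.mem_Iio, Fin.lt_def] at hx
      exact Finset.mem_Iio.2 (hσ _ _ ((Nat.div_lt_iff_lt_mul hs).2 hx))
    simpa only [Fin.card_Iio] using this
  · have := hcard (Finset.Ioi ⟨(r : ℕ) / s * s + s - 1, by omega⟩) (Finset.Ioi (σ r))
      fun x hx => by
        rw [Finset.mem_Ioi, Fin.lt_def] at hx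
        refine Finset.mem_Ioi.2 (hσ _ _ ((Nat.le_div_iff_mul_le hs).2 ?_))
        rw [Nat.succ_mul]
        simp only at hx
        omega
    simp only [Fin.card_Ioi] at this
    have := (σ r).isLt
    omega

/-- Residues modulo `w` are distinct on a block of `s ≤ w` consecutive integers. -/
lemma eq_of_div_eq_of_mod_eq {s w a b : ℕ} (hs : 0 < s) (hsw : s ≤ w)
    (hdiv : a / s = b / s) (hmod : a % w = b % w) : a = b := by
  have ha := Nat.div_add_mod a s
  have hb := Nat.div_add_mod b s
  have ha' := Nat.mod_lt a hs
  have hb' := Nat.mod_lt b hs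
  rw [hdiv] at ha
  obtain hab | hab := le_total a b
  · have hd : w ∣ b - a := (Nat.modEq_iff_dvd' hab).1 hmod
    have := Nat.eq_zero_of_dvd_of_lt hd (by omega)
    omega
  · have hd : w ∣ a - b := (Nat.modEq_iff_dvd' hab).1 hmod.symm
    have := Nat.eq_zero_of_dvd_of_lt hd (by omega)
    omega

/-- For a maximizer `σ` of `pow`, the key `(σ r / s, σ r % w)`, encoded as the natural number
`σ r / s * w + σ r % w`, is strictly increasing in `r`. -/
lemma strictMono_key_of_maximal {n α s w z : ℕ} (hs : 0 < s) (hsw : s ≤ w) (hw : 0 < w)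
    (hsα : s ∣ α) (hz : z = α / s)
    (h : Fin w → ℕ) (hmono : StrictMono h) (hrange : ∀ ℓ, h ℓ ≤ n)
    (i : Fin z → ℕ) (higap : ∀ ℓ₁ ℓ₂ : Fin z, ℓ₁ < ℓ₂ → α * n < i ℓ₂ - i ℓ₁)
    (σ : Equiv.Perm (Fin α))
    (hmax : ∀ τ, powPerm α s w z hw hsα hz h i τ ≤ powPerm α s w z hw hsα hz h i σ) :
    StrictMono fun r => (σ r : ℕ) / s * w + (σ r : ℕ) % w := by
  have hlt (r : Fin α) : (r : ℕ) / s < z := by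
    rw [hz]; exact Nat.div_lt_div_of_lt_of_dvd hsα r.isLt
  have hex : ∀ {r₁ r₂ : Fin α}, r₁ ≠ r₂ → _ := fun {r₁ r₂} hne =>
    exchange_le (fun r c => (c : ℕ) / w * i ⟨(r : ℕ) / s, hlt r⟩
      + (r : ℕ) * h ⟨(c : ℕ) % w, Nat.mod_lt _ hw⟩) σ hmax hne
  have hcross : ∀ r₁ r₂ : Fin α, (r₁ : ℕ) / s < (r₂ : ℕ) / s → σ r₁ < σ r₂ := by
    intro r₁ r₂ hr
    have hr' : (r₁ : ℕ) < r₂ := Nat.lt_of_div_lt_div hr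
    have hne : r₁ ≠ r₂ := by rintro rfl; exact lt_irrefl _ hr
    by_contra hcon
    have hc : ((σ r₂ : Fin α) : ℕ) < σ r₁ :=
      lt_of_le_of_ne (not_lt.1 hcon) fun e => hne (σ.injective (Fin.ext e)).symm
    have hE := hex hne
    have hI := higap ⟨_, hlt r₁⟩ ⟨_, hlt r₂⟩ (Fin.mk_lt_mk.2 hr)
    have hA : (σ r₂ : ℕ) / w ≤ (σ r₁ : ℕ) / w := Nat.div_le_div_right hc.le
    obtain hA | hA := hA.eq_or_lt
    · have hm : (σ r₂ : ℕ) % w < (σ r₁ : ℕ) % w := by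
        have h1 := Nat.div_add_mod (σ r₁ : ℕ) w
        have h2 := Nat.div_add_mod (σ r₂ : ℕ) w
        rw [hA] at h2
        omega
      have hH : h ⟨_, Nat.mod_lt _ hw⟩ < h ⟨_, Nat.mod_lt _ hw⟩ := hmono (Fin.mk_lt_mk.2 hm)
      rw [hA] at hE
      nlinarith
    · have hH := hrange ⟨(σ r₂ : ℕ) % w, Nat.mod_lt _ hw⟩
      have hrα := r₂.isLt
      generalize h ⟨(σ r₂ : ℕ) % w, Nat.mod_lt _ hw⟩ = H₂ at *
      generalize h ⟨(σ r₁ : ℕ) % w, Nat.mod_lt _ hw⟩ = H₁ at *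
      generalize i ⟨(r₁ : ℕ) / s, hlt r₁⟩ = I₁ at *
      generalize i ⟨(r₂ : ℕ) / s, hlt r₂⟩ = I₂ at *
      -- The `i`-part gains at least `I₂ - I₁ > α * n`; this outweighs the `h`-part loss, at most `r₂ * H₂`.
      have hloss : (r₂ : ℕ) * H₂ ≤ α * n := Nat.mul_le_mul hrα.le hH
      have hgain : (r₁ : ℕ) * H₁ ≤ r₂ * H₁ := Nat.mul_le_mul_right _ hr'.le
      obtain ⟨e, rfl⟩ : ∃ e, I₂ = I₁ + e := ⟨I₂ - I₁, by omega⟩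
      have he : α * n < e := by omega
      have := Nat.mul_le_mul_right e (Nat.succ_le_of_lt hA)
      nlinarith [Nat.zero_le ((r₁ : ℕ) * H₂)]
  have hblock := div_eq_of_lt_of_div_lt hs hsα σ hcross
  intro r₁ r₂ hr
  have hr' : (r₁ : ℕ) < r₂ := hr
  simp only
  rw [hblock r₁, hblock r₂]
  obtain hd | hd := (Nat.div_le_div_right (c := s) hr'.le).eq_or_lt
  · have hmne : (σ r₁ : ℕ) % w ≠ (σ r₂ : ℕ) % w := fun e =>
      hr.ne (σ.injective (Fin.ext (eq_of_div_eq_of_mod_eq hs hsw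
        (by rw [hblock, hblock, hd]) e)))
    have hE := hex hr.ne
    rw [hd]
    by_contra hcon
    have hm : (σ r₂ : ℕ) % w < (σ r₁ : ℕ) % w := by omega
    have hH : h ⟨_, Nat.mod_lt _ hw⟩ < h ⟨_, Nat.mod_lt _ hw⟩ := hmono (Fin.mk_lt_mk.2 hm)
    have hi : i ⟨(r₁ : ℕ) / s, hlt r₁⟩ = i ⟨(r₂ : ℕ) / s, hlt r₂⟩ := by congr 2
    rw [hi] at hE
    nlinarith
  · have h1 := Nat.mod_lt (σ r₁ : ℕ) hw
    have := Nat.mul_le_mul_right w (Nat.succ_le_of_lt hd)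
    rw [Nat.succ_mul] at this
    omega

/-- Lemma 6 of the paper: the maximizer of `pow` over the permutations
of `Fin α` is unique: there is a permutation `σ*` with `pow(σ) < pow(σ*)` for every
`σ ≠ σ*`. -/
theorem pow_maximizer_unique
    (n b dmin d α s w z : ℕ)
    (hb : 0 < b) (h2b : 2 * b < dmin) (hdmind : dmin ≤ d) (hdn : d ≤ n) (hα : 0 < α)
    (hs : s = dmin - 2 * b) (hw : w = d - 2 * b)
    (hsα : s ∣ α) (hwα : w ∣ α) (hz : z = α / s)
    (h : Fin w → ℕ) (hmono : StrictMono h) (hrange : ∀ ℓ, 1 ≤ h ℓ ∧ h ℓ ≤ n)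
    (i : Fin z → ℕ) (himono : StrictMono i)
    (higap : ∀ ℓ₁ ℓ₂ : Fin z, ℓ₁ < ℓ₂ → α * n < i ℓ₂ - i ℓ₁) :
    ∃ σstar : Equiv.Perm (Fin α), ∀ σ : Equiv.Perm (Fin α), σ ≠ σstar →
      powPerm α s w z (by omega) hsα hz h i σ <
        powPerm α s w z (by omega) hsα hz h i σstar := by
  have hs0 : 0 < s := by omega
  have hw0 : 0 < w := by omega
  have hsw : s ≤ w := by omega
  obtain ⟨σ₀, hσ₀⟩ := Finite.exists_max fun σ => powPerm α s w z hw0 hsα hz h i σ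
  refine ⟨σ₀, fun σ hne => lt_of_le_of_ne (hσ₀ σ) fun heq => hne ?_⟩
  have hσ : ∀ τ, powPerm α s w z hw0 hsα hz h i τ ≤ powPerm α s w z hw0 hsα hz h i σ :=
    fun τ => (hσ₀ τ).trans heq.ge
  have m₀ := strictMono_key_of_maximal hs0 hsw hw0 hsα hz h hmono (fun ℓ => (hrange ℓ).2) i higap
    σ₀ hσ₀
  have m := strictMono_key_of_maximal hs0 hsw hw0 hsα hz h hmono (fun ℓ => (hrange ℓ).2) i higap
    σ hσ
  let key : Fin α → ℕ := fun c => (c : ℕ) / s * w + (c : ℕ) % w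
  have hrng : Set.range (key ∘ σ) = Set.range (key ∘ σ₀) := by
    rw [σ.surjective.range_comp, σ₀.surjective.range_comp]
  have hkey : key ∘ σ = key ∘ σ₀ := (StrictMono.range_inj m m₀).1 hrng
  -- `key` is injective because `key ∘ σ` is and `σ` is surjective.
  have hinj : Function.Injective key := m.injective.of_comp_right σ.surjective
  exact Equiv.ext fun r => hinj (congrFun hkey r)
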